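/- Narcissistic-avaricious welfare guarantee: in any liquid democracy game, let p ∈ [0,1], and for each agent i let i* ∈ argmax_{j∈V} u_{ij}. Let z be the mixed profile in which each agent i votes herself with probability p and delegates to i* with probability 1−p. Then SW(z) ≥ p(1−p) · OPT. -/

import Mathlib

/-!
The bound holds agent by agent, against the ideal utility `u i (istar i)`, which no profile exceeds.
Under the narcissistic-avaricious profile, the event that `i` delegates to `istar i` and `istar i`
votes has probability at least `p * (1 - p)`: distinct agents randomize independently, and if
`istar i = i`, then `i` surely votes. On this event agent `i` attains her ideal utility, and
elsewhere her utility is nonnegative.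
-/

open Finset

/-- The guru of agent `i` under pure profile `s` (where `s i = some j` means `i`
delegates to `j`, with `s i = some i` meaning `i` votes herself, and `s i = none`
meaning `i` abstains): follow delegation arcs for `n` steps; the endpoint is the
guru provided it votes itself. -/
def guru {n : ℕ} (s : Fin n → Option (Fin n)) (i : Fin n) : Option (Fin n) :=
  ((fun o => Option.bind o s)^[n] (some i)).bind
    (fun j => if s j = some j then some j else none)

/-- Utility of agent `i` in the pure profile `s`: `u i (g i)` if the guru exists, else `0`. -/
def pureUtil {n : ℕ} (u : Fin n → Fin n → ℝ) (s : Fin n → Option (Fin n)) (i : Fin n) : ℝ :=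
  (guru s i).elim 0 (u i)

/-- A mixed strategy for a single agent: nonnegative, total probability at most one
(the residual probability is abstention). -/
def IsStrat {n : ℕ} (y : Fin n → ℝ) : Prop := (∀ j, 0 ≤ y j) ∧ (∑ j, y j) ≤ 1

/-- A mixed strategy profile. -/
def IsMixed {n : ℕ} (x : Fin n → Fin n → ℝ) : Prop := ∀ i, IsStrat (x i)

/-- Probability that the independent randomization `x` produces the pure profile `s`. -/
def prob {n : ℕ} (x : Fin n → Fin n → ℝ) (s : Fin n → Option (Fin n)) : ℝ :=
  ∏ i, (s i).elim (1 - ∑ j, x i j) (x i)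

/-- Expected utility of agent `i` under the mixed profile `x`. -/
def util {n : ℕ} (u x : Fin n → Fin n → ℝ) (i : Fin n) : ℝ :=
  ∑ s : Fin n → Option (Fin n), prob x s * pureUtil u s i

/-- Expected social welfare of the mixed profile `x`. -/
def SW {n : ℕ} (u x : Fin n → Fin n → ℝ) : ℝ := ∑ i, util u x i

/-- The set of social-welfare values achievable by mixed profiles; `OPT` is its greatest element. -/
def SWvals {n : ℕ} (u : Fin n → Fin n → ℝ) : Set ℝ :=
  {w | ∃ x, IsMixed x ∧ w = SW u x}

/-- `x` is an `ε`-Nash equilibrium. -/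
def EpsNash {n : ℕ} (u : Fin n → Fin n → ℝ) (ε : ℝ) (x : Fin n → Fin n → ℝ) : Prop :=
  ∀ i y, IsStrat y → util u x i ≥ (1 - ε) * util u (Function.update x i y) i

/-- `x` is an (exact, mixed) Nash equilibrium. -/
def NashEq {n : ℕ} (u x : Fin n → Fin n → ℝ) : Prop :=
  ∀ i y, IsStrat y → util u x i ≥ util u (Function.update x i y) i

/-- The narcissistic-avaricious profile: each agent i votes herself with
probability p and delegates to istar i with probability 1 - p. -/
def nazProfile {n : ℕ} (p : ℝ) (istar : Fin n → Fin n) : Fin n → Fin n → ℝ :=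
  fun i j => (if j = i then p else 0) + (if j = istar i then 1 - p else 0)

lemma sum_filter_prod_eq_prod {ι R : Type*} {κ : ι → Type*} [Fintype ι] [DecidableEq ι]
    [∀ i, Fintype (κ i)] [CommSemiring R] (f : ∀ i, κ i → R) (T : Finset ι)
    (hf : ∀ i ∉ T, ∑ k, f i k = 1) (c : ∀ i, κ i)
    [DecidablePred fun s : ∀ i, κ i => ∀ i ∈ T, s i = c i] :
    ∑ s ∈ ({s | ∀ i ∈ T, s i = c i} : Finset (∀ i, κ i)), ∏ i, f i (s i) =
      ∏ i ∈ T, f i (c i) := by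
  let t : ∀ i, Finset (κ i) := fun i => if i ∈ T then {c i} else univ
  have mem_t (s : ∀ i, κ i) (i : ι) : s i ∈ t i ↔ (i ∈ T → s i = c i) := by
    by_cases hi : i ∈ T <;> simp [t, hi]
  have sum_t (i : ι) : ∑ k ∈ t i, f i k = if i ∈ T then f i (c i) else 1 := by
    by_cases hi : i ∈ T <;> simp [t, hi, hf]
  have filter_eq : ({s | ∀ i ∈ T, s i = c i} : Finset (∀ i, κ i)) = Fintype.piFinset t := by
    ext s
    simp only [mem_filter_univ, Fintype.mem_piFinset, mem_t]
  calc ∑ s ∈ ({s | ∀ i ∈ T, s i = c i} : Finset (∀ i, κ i)), ∏ i, f i (s i)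
      = ∑ s ∈ Fintype.piFinset t, ∏ i, f i (s i) := by rw [filter_eq]
    _ = ∏ i, ∑ k ∈ t i, f i k := (prod_univ_sum t f).symm
    _ = ∏ i ∈ T, f i (c i) := by simp only [sum_t, Fintype.prod_ite_mem]

section Profile

variable {n : ℕ} {u x : Fin n → Fin n → ℝ} {s : Fin n → Option (Fin n)} {i j : Fin n}

lemma guru_eq_some_of_delegate (hi : s i = some j) (hj : s j = some j) : guru s i = some j := by
  cases n with
  | zero => exact i.elim0
  | succ m =>
    have iterate_eq : (fun o => Option.bind o s)^[m + 1] (some i) = some j := by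
      rw [Function.iterate_succ_apply, Option.bind_some, hi]
      exact Function.iterate_fixed hj m
    simp only [guru, iterate_eq, Option.bind_some, hj, if_true]

lemma pureUtil_eq_of_delegate (hi : s i = some j) (hj : s j = some j) :
    pureUtil u s i = u i j := by
  rw [pureUtil, guru_eq_some_of_delegate hi hj, Option.elim_some]

lemma pureUtil_nonneg (hu : ∀ j, 0 ≤ u i j) (s : Fin n → Option (Fin n)) :
    0 ≤ pureUtil u s i := by
  unfold pureUtil
  cases guru s i with
  | none => exact le_rfl
  | some j => exact hu j

lemma pureUtil_le {M : ℝ} (hM : 0 ≤ M) (hu : ∀ j, u i j ≤ M) (s : Fin n → Option (Fin n)) :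
    pureUtil u s i ≤ M := by
  unfold pureUtil
  cases guru s i with
  | none => exact hM
  | some j => exact hu j

lemma IsMixed.prob_nonneg (hx : IsMixed x) (s : Fin n → Option (Fin n)) : 0 ≤ prob x s := by
  refine prod_nonneg fun i _ => ?_
  cases s i with
  | none => exact sub_nonneg.2 (hx i).2
  | some j => exact (hx i).1 j

lemma sum_prob_filter_eq_prod (x : Fin n → Fin n → ℝ) (T : Finset (Fin n)) (c : Fin n → Fin n) :
    ∑ s with ∀ k ∈ T, s k = some (c k), prob x s = ∏ k ∈ T, x k (c k) :=
  sum_filter_prod_eq_prod (fun k (o : Option (Fin n)) => o.elim (1 - ∑ j, x k j) (x k)) T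
    (fun k _ => by simp [Fintype.sum_option]) fun k => some (c k)

lemma sum_prob (x : Fin n → Fin n → ℝ) : ∑ s, prob x s = 1 := by
  simpa using sum_prob_filter_eq_prod x ∅ id

lemma IsMixed.util_le (hx : IsMixed x) {M : ℝ} (hM : 0 ≤ M) (hu : ∀ j, u i j ≤ M) :
    util u x i ≤ M :=
  calc util u x i ≤ ∑ s, prob x s * M :=
        sum_le_sum fun s _ => mul_le_mul_of_nonneg_left (pureUtil_le hM hu s) (hx.prob_nonneg s)
    _ = M := by rw [← sum_mul, sum_prob, one_mul]

-- For `i = j` the pair `{i, j}` is a singleton, so the factor `x j j` is not counted twice.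
lemma IsMixed.prod_pair_mul_le_util (hx : IsMixed x) (hu : ∀ k, 0 ≤ u i k) (j : Fin n) :
    (∏ k ∈ {i, j}, x k j) * u i j ≤ util u x i :=
  calc (∏ k ∈ {i, j}, x k j) * u i j
      = ∑ s with ∀ k ∈ ({i, j} : Finset (Fin n)), s k = some j, prob x s * u i j := by
        rw [← sum_mul, sum_prob_filter_eq_prod x {i, j} fun _ => j]
    _ = ∑ s with ∀ k ∈ ({i, j} : Finset (Fin n)), s k = some j, prob x s * pureUtil u s i := by
        refine sum_congr rfl fun s hs => ?_
        rw [mem_filter_univ] at hs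
        rw [pureUtil_eq_of_delegate (hs i (by simp)) (hs j (by simp))]
    _ ≤ util u x i :=
        sum_le_univ_sum_of_nonneg fun s => mul_nonneg (hx.prob_nonneg s) (pureUtil_nonneg hu s)

end Profile

section NazProfile

variable {n : ℕ} {p : ℝ} (hp : p ∈ Set.Icc (0 : ℝ) 1) (istar : Fin n → Fin n)

include hp

lemma isMixed_nazProfile : IsMixed (nazProfile p istar) := by
  obtain ⟨hp0, hp1⟩ := hp
  refine fun i => ⟨fun j => ?_, ?_⟩
  · unfold nazProfile
    split_ifs <;> linarith
  · simp [nazProfile, sum_add_distrib]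

lemma mul_one_sub_le_prod_pair_nazProfile (i : Fin n) :
    p * (1 - p) ≤ ∏ k ∈ {i, istar i}, nazProfile p istar k (istar i) := by
  obtain ⟨hp0, hp1⟩ := hp
  by_cases hi : istar i = i
  · have self_vote : nazProfile p istar i i = 1 := by simp [nazProfile, hi]
    rw [hi, pair_eq_singleton, prod_singleton, self_vote]
    exact mul_le_one₀ hp1 (sub_nonneg.2 hp1) (sub_le_self 1 hp0)
  · have delegate : nazProfile p istar i (istar i) = 1 - p := by simp [nazProfile, hi]
    have vote : p ≤ nazProfile p istar (istar i) (istar i) := by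
      simp only [nazProfile, if_true, le_add_iff_nonneg_right]
      split_ifs <;> linarith
    rw [prod_pair (Ne.symm hi), delegate, mul_comm]
    exact mul_le_mul_of_nonneg_left vote (sub_nonneg.2 hp1)

lemma mul_one_sub_mul_le_util_nazProfile {u : Fin n → Fin n → ℝ} {i : Fin n} (hu : ∀ j, 0 ≤ u i j) :
    p * (1 - p) * u i (istar i) ≤ util u (nazProfile p istar) i :=
  (mul_le_mul_of_nonneg_right (mul_one_sub_le_prod_pair_nazProfile hp istar i) (hu _)).trans
    ((isMixed_nazProfile hp istar).prod_pair_mul_le_util hu _)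

end NazProfile

theorem stmt16_general {n : ℕ} {u : Fin n → Fin n → ℝ} (hu : ∀ i j, 0 ≤ u i j)
    {p : ℝ} (hp : p ∈ Set.Icc (0 : ℝ) 1)
    {istar : Fin n → Fin n} (histar : ∀ i j, u i j ≤ u i (istar i))
    {x : Fin n → Fin n → ℝ} (hx : IsMixed x) :
    p * (1 - p) * SW u x ≤ SW u (nazProfile p istar) := by
  have hpp : 0 ≤ p * (1 - p) := mul_nonneg hp.1 (sub_nonneg.2 hp.2)
  calc p * (1 - p) * SW u x = ∑ i, p * (1 - p) * util u x i := mul_sum ..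
    _ ≤ ∑ i, p * (1 - p) * u i (istar i) := sum_le_sum fun i _ =>
        mul_le_mul_of_nonneg_left (hx.util_le (hu i _) (histar i)) hpp
    _ ≤ SW u (nazProfile p istar) := sum_le_sum fun i _ =>
        mul_one_sub_mul_le_util_nazProfile hp istar (hu i)

/-- Narcissistic-avaricious welfare guarantee: SW(z) ≥ p(1-p) · OPT. -/
theorem stmt16 {n : ℕ} (u : Fin n → Fin n → ℝ) (hu : ∀ i j, 0 ≤ u i j ∧ u i j ≤ 1)
    (p : ℝ) (hp : p ∈ Set.Icc (0:ℝ) 1)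
    (istar : Fin n → Fin n) (histar : ∀ i j, u i j ≤ u i (istar i))
    (OPT : ℝ) (hOPT : IsGreatest (SWvals u) OPT) :
    SW u (nazProfile p istar) ≥ p * (1-p) * OPT := by
  obtain ⟨⟨x, hx, rfl⟩, -⟩ := hOPT
  exact stmt16_general (fun i j => (hu i j).1) hp histar hx
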